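/- Let N be a nilpotent-independent (NI) subset of M(d,q) and suppose there exist real constants a, k > 0 such that |N_i|/|GL(i,q)| \ge a - k q^{-i} for all 1 \le i \le d. Then |N|/|M(d,q)| \ge a - (a+k) d q^{-d} \ge a - (a+k)(2q/3)^{-d}, where |M(d,q)| = q^{d^2}. -/

import Mathlib

open Matrix Finset

/-- `Vinv X` : the "invertible part" subspace, `range (X^d)`. -/
noncomputable def Vinv {F : Type*} [Field F] {d : ℕ} (X : Matrix (Fin d) (Fin d) F) :
    Submodule F (Fin d → F) :=
  LinearMap.range (X.mulVecLin ^ d)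

noncomputable def Vnil {F : Type*} [Field F] {d : ℕ} (X : Matrix (Fin d) (Fin d) F) :
    Submodule F (Fin d → F) :=
  LinearMap.ker (X.mulVecLin ^ d)

open Classical in
/-- The projection of `F^d` onto `Vinv X` with kernel `Vnil X`. -/
noncomputable def fittingProj {F : Type*} [Field F] {d : ℕ} (X : Matrix (Fin d) (Fin d) F) :
    (Fin d → F) →ₗ[F] (Fin d → F) :=
  if h : IsCompl (Vinv X) (Vnil X) then
    (Vinv X).subtype ∘ₗ Submodule.linearProjOfIsCompl (Vinv X) (Vnil X) h
  else 0

/-- `N` is a nilpotent-independent subset of `M(d,q)`. -/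
def IsNI {F : Type*} [Field F] {d : ℕ} (N : Set (Matrix (Fin d) (Fin d) F)) : Prop :=
  (∀ X ∈ N, ∀ g : GL (Fin d) F, (↑g⁻¹ : Matrix (Fin d) (Fin d) F) * X * (↑g : Matrix (Fin d) (Fin d) F) ∈ N) ∧
  (∀ X : Matrix (Fin d) (Fin d) F,
    X ∈ N ↔ LinearMap.toMatrix' (X.mulVecLin ∘ₗ fittingProj X) ∈ N)

/-- the block-diagonal matrix `diag(Y, 0)` of size `d`, for `Y` of size `i ≤ d`. -/
def embedBlock {F : Type*} [Field F] (d : ℕ) {i : ℕ} (Y : Matrix (Fin i) (Fin i) F) :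
    Matrix (Fin d) (Fin d) F :=
  Matrix.of fun r c =>
    if h : (r : ℕ) < i ∧ (c : ℕ) < i then Y ⟨r, h.1⟩ ⟨c, h.2⟩ else 0

/-- `N_i`, the invertible matrices of size `i` whose block-diagonal extension lies in `N`. -/
def NIsub {F : Type*} [Field F] {d : ℕ} (N : Set (Matrix (Fin d) (Fin d) F)) (i : ℕ) :
    Set (GL (Fin i) F) :=
  {Y : GL (Fin i) F | embedBlock d (↑Y : Matrix (Fin i) (Fin i) F) ∈ N}

/-- `ω(j,q) = ∏_{k=1}^j (1 - q^{-k})`, with `ω(0,q) = 1`. -/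
noncomputable def omegaqd (j q : ℕ) : ℝ :=
  ∏ k ∈ Finset.Icc 1 j, (1 - ((q : ℝ))⁻¹ ^ k)

/-!
The projection `π_X` is the unique idempotent commuting with `X` such that `X` is invertible on its
image and nilpotent on its kernel, so `X ↦ π_X` is equivariant under conjugation. Idempotent
matrices of equal rank are conjugate, the centralizer of `diag(1_m, 0)` in `GL(m + n, q)` is
`GL(m, q) × GL(n, q)`, and the matrices of an NI set `N` with `π_X = diag(1_m, 0)` are the
`diag(Y, Z)` with `Y ∈ N_m` and `Z` nilpotent. Orbit-stabilizer therefore gives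

`|N| / |GL(d, q)| = ∑_{m + n = d} (|N_m| / |GL(m, q)|) ν_n`,

where `ν_n |GL(n, q)|` is the number of nilpotent `n × n` matrices. Taking `N = M(d, q)`, the sum
`ν_0 + ⋯ + ν_d` is `|M(d, q)| / |GL(d, q)| = ω(d, q)⁻¹`, whence `ν_n = q⁻ⁿ ω(n, q)⁻¹`. Since
`ω(n, q)` decreases with `n`, replacing `|N_m| / |GL(m, q)|` by `a - k_m q⁻ᵐ` loses at most
`k_m q⁻ᵈ ω(d, q)⁻¹` in the `m`-th term.
-/

section FittingIdempotent

variable {R S : Type*} [Ring R] [Ring S] {x a e f p : R}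

/-- The Fitting idempotent `e` of `x`: the idempotent commuting with `x` such that `x` is invertible
on the image of `e` and nilpotent on the image of `1 - e`. Invertibility of `x` in the corner ring
`eRe` is expressed by saying that `x * e + (1 - e)` is a unit of `R`. -/
structure IsFittingIdempotent (x e : R) : Prop where
  isIdempotentElem : IsIdempotentElem e
  commute : Commute x e
  isUnit : IsUnit (x * e + (1 - e))
  isNilpotent : IsNilpotent (x * (1 - e))

lemma pow_mul_eq_pow_mul_of_commute (h : a * p = x * p) (hxp : Commute x p) (n : ℕ) :
    a ^ n * p = x ^ n * p := by
  induction n with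
  | zero => simp only [pow_zero]
  | succ n ih =>
    calc a ^ (n + 1) * p = a * (a ^ n * p) := by rw [pow_succ', mul_assoc]
      _ = a * p * x ^ n := by rw [ih, (hxp.pow_left n).eq, mul_assoc]
      _ = x ^ (n + 1) * p := by rw [h, mul_assoc, ← (hxp.pow_left n).eq, ← mul_assoc, ← pow_succ']

namespace IsFittingIdempotent

lemma map (h : IsFittingIdempotent x e) (φ : R →+* S) : IsFittingIdempotent (φ x) (φ e) where
  isIdempotentElem := h.isIdempotentElem.map φ
  commute := h.commute.map φ
  isUnit := by simpa using h.isUnit.map φ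
  isNilpotent := by simpa using h.isNilpotent.map φ

lemma exists_pow_mul_one_sub_eq_zero (h : IsFittingIdempotent x e) :
    ∃ n, x ^ n * (1 - e) = 0 := by
  obtain ⟨n, hn⟩ := h.isNilpotent
  have hmul : x * (1 - e) * (1 - e) = x * (1 - e) := by
    rw [mul_assoc, h.isIdempotentElem.one_sub.eq]
  refine ⟨n, ?_⟩
  rw [← pow_mul_eq_pow_mul_of_commute hmul ((Commute.one_right x).sub_right h.commute), hn,
    zero_mul]

lemma exists_isUnit_pow_mul_eq (h : IsFittingIdempotent x e) (n : ℕ) :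
    ∃ u, IsUnit u ∧ Commute u e ∧ u * e = x ^ n * e := by
  refine ⟨_, h.isUnit.pow n, ?_, pow_mul_eq_pow_mul_of_commute ?_ h.commute n⟩
  · exact ((h.commute.mul_left (Commute.refl e)).add_left
      ((Commute.one_left e).sub_left (Commute.refl e))).pow_left n
  · rw [add_mul, h.isIdempotentElem.one_sub_mul_self, add_zero, mul_assoc, h.isIdempotentElem.eq]

-- `x ^ n` acts invertibly on `e` and kills `1 - f`, so the two are orthogonal.
lemma mul_eq_left (he : IsFittingIdempotent x e) (hf : IsFittingIdempotent x f) :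
    e * f = e ∧ f * e = e := by
  obtain ⟨n, hn⟩ := hf.exists_pow_mul_one_sub_eq_zero
  obtain ⟨u, hu, hue, hux⟩ := he.exists_isUnit_pow_mul_eq n
  have hn' : (1 - f) * x ^ n = 0 := by
    rw [← hn, (((Commute.one_right x).sub_right hf.commute).pow_left n).eq]
  have hleft : u * (e * (1 - f)) = 0 := by
    rw [← mul_assoc, hux, (he.commute.pow_left n).eq, mul_assoc, hn, mul_zero]
  have hright : (1 - f) * e * u = 0 := by
    rw [mul_assoc, ← hue.eq, hux, ← mul_assoc, hn', zero_mul]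
  rw [hu.mul_right_eq_zero, mul_one_sub, sub_eq_zero] at hleft
  rw [hu.mul_left_eq_zero, one_sub_mul, sub_eq_zero] at hright
  exact ⟨hleft.symm, hright.symm⟩

theorem unique (he : IsFittingIdempotent x e) (hf : IsFittingIdempotent x f) : e = f :=
  (he.mul_eq_left hf).1.symm.trans (hf.mul_eq_left he).2

end IsFittingIdempotent

end FittingIdempotent

section FittingDecomposition

variable {K V : Type*} [Field K] [AddCommGroup V] [Module K V]

lemma commute_projection_range_ker (f g : Module.End K V) (hfg : Commute f g)
    (h : IsCompl (LinearMap.range g) (LinearMap.ker g)) :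
    Commute f (Submodule.projection _ _ h) := by
  refine ((LinearMap.IsIdempotentElem.commute_iff
    (Submodule.isIdempotentElem_projection h)).2 ⟨?_, ?_⟩).symm
  · rw [Submodule.range_projection, Module.End.mem_invtSubmodule]
    rintro _ ⟨u, rfl⟩
    exact ⟨f u, (LinearMap.congr_fun hfg.eq u).symm⟩
  · rw [Submodule.ker_projection, Module.End.mem_invtSubmodule]
    intro u hu
    rw [Submodule.mem_comap, LinearMap.mem_ker, ← Module.End.mul_apply, ← hfg.eq,
      Module.End.mul_apply, LinearMap.mem_ker.1 hu, map_zero]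

variable [FiniteDimensional K V]

lemma ker_pow_eq_ker_pow_of_finrank_le (f : Module.End K V) {m n : ℕ}
    (hm : Module.finrank K V ≤ m) (hn : Module.finrank K V ≤ n) :
    LinearMap.ker (f ^ m) = LinearMap.ker (f ^ n) :=
  (Module.End.ker_pow_eq_ker_pow_finrank_of_le hm).trans
    (Module.End.ker_pow_eq_ker_pow_finrank_of_le hn).symm

theorem isCompl_range_pow_ker_pow (f : Module.End K V) {n : ℕ} (hn : Module.finrank K V ≤ n) :
    IsCompl (LinearMap.range (f ^ n)) (LinearMap.ker (f ^ n)) := by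
  rw [Submodule.isCompl_iff_disjoint _ _ (LinearMap.finrank_range_add_finrank_ker _).ge,
    Submodule.disjoint_def]
  rintro _ ⟨u, rfl⟩ hu
  have hu' : u ∈ LinearMap.ker (f ^ (n + n)) := by rwa [LinearMap.mem_ker, pow_add]
  rwa [ker_pow_eq_ker_pow_of_finrank_le f (by omega) hn] at hu'

theorem isFittingIdempotent_projection (f : Module.End K V) {n : ℕ}
    (hn : Module.finrank K V ≤ n)
    (h : IsCompl (LinearMap.range (f ^ n)) (LinearMap.ker (f ^ n))) :
    IsFittingIdempotent f (Submodule.projection _ _ h) := by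
  set p : Module.End K V := Submodule.projection _ _ h
  have hp : IsIdempotentElem p := Submodule.isIdempotentElem_projection h
  have hker : LinearMap.ker p = LinearMap.ker (f ^ n) := Submodule.ker_projection h
  have hcomm : Commute f p :=
    commute_projection_range_ker f (f ^ n) ((Commute.refl f).pow_right n) h
  refine ⟨hp, hcomm, ?_, n + 1, ?_⟩
  · rw [LinearMap.isUnit_iff_ker_eq_bot, LinearMap.ker_eq_bot']
    intro v hv
    have hfpv : (f * p) v = 0 := by
      have hmul : p * (f * p + (1 - p)) = f * p := by
        rw [mul_add, hp.mul_one_sub_self, add_zero, ← mul_assoc, ← hcomm.eq, mul_assoc, hp.eq]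
      rw [← hmul, Module.End.mul_apply, hv, map_zero]
    have hpv : v = p v := by
      rwa [LinearMap.add_apply, hfpv, zero_add, LinearMap.sub_apply, Module.End.one_apply,
        sub_eq_zero] at hv
    have hfv : f v = 0 := by rwa [Module.End.mul_apply, ← hpv] at hfpv
    have hv_ker : v ∈ LinearMap.ker p := by
      rw [hker, ← ker_pow_eq_ker_pow_of_finrank_le f (Nat.le_succ_of_le hn) hn,
        LinearMap.mem_ker, pow_succ, Module.End.mul_apply, hfv, map_zero]
    rw [hpv, LinearMap.mem_ker.1 hv_ker]
  · have hkill : f ^ n * (1 - p) = 0 := by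
      rw [Module.End.mul_eq_comp, ← LinearMap.range_le_ker_iff,
        ← LinearMap.IsIdempotentElem.ker_eq_range_one_sub hp, hker]
    rw [((Commute.one_right f).sub_right hcomm).mul_pow, hp.one_sub.pow_succ_eq, pow_succ',
      mul_assoc, hkill, mul_zero]

end FittingDecomposition

section BlockDiagonal

variable {m n ι R : Type*} [Fintype m] [Fintype n] [Fintype ι]
  [DecidableEq m] [DecidableEq n] [DecidableEq ι]

/-- The ring homomorphism `(Y, Z) ↦ diag(Y, Z)`, with the rows and columns of the block matrix
relabelled along `e`. -/
def diagBlocks [Semiring R] (e : m ⊕ n ≃ ι) : Matrix m m R × Matrix n n R →+* Matrix ι ι R where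
  toFun p := reindex e e (fromBlocks p.1 0 0 p.2)
  map_zero' := by simp
  map_one' := by simp
  map_add' p q := by
    ext i j
    simp only [reindex_apply, submatrix_apply, Matrix.add_apply]
    rcases e.symm i with i | i <;> rcases e.symm j with j | j <;> simp
  map_mul' p q := by simp [Matrix.submatrix_mul_equiv, fromBlocks_multiply]

section Semiring

variable [Semiring R] (e : m ⊕ n ≃ ι)

lemma diagBlocks_apply (p : Matrix m m R × Matrix n n R) :
    diagBlocks e p = reindex e e (fromBlocks p.1 0 0 p.2) := rfl

lemma diagBlocks_injective : Function.Injective (diagBlocks (R := R) e) := by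
  intro p q h
  obtain ⟨h₁, -, -, h₂⟩ := fromBlocks_inj.1 ((reindex e e).injective h)
  exact Prod.ext h₁ h₂

theorem commute_diagBlocks_one_zero_iff {X : Matrix ι ι R} :
    Commute X (diagBlocks e (1, 0)) ↔ X ∈ Set.range (diagBlocks e) := by
  constructor
  · obtain ⟨X, rfl⟩ := (reindex e e).surjective X
    intro h
    have hblocks : X * fromBlocks 1 0 0 0 = fromBlocks 1 0 0 0 * X :=
      (reindexRingEquiv R e).injective (by simpa [diagBlocks_apply] using h.eq)
    rw [← fromBlocks_toBlocks X, fromBlocks_multiply, fromBlocks_multiply, fromBlocks_inj]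
      at hblocks
    refine ⟨(X.toBlocks₁₁, X.toBlocks₂₂), ?_⟩
    have h₁₂ : X.toBlocks₁₂ = 0 := by simpa using hblocks.2.1.symm
    have h₂₁ : X.toBlocks₂₁ = 0 := by simpa using hblocks.2.2.1
    rw [diagBlocks_apply, ← h₁₂, ← h₂₁, fromBlocks_toBlocks]
  · rintro ⟨p, rfl⟩
    exact Commute.map (by simp [Prod.ext_iff, Commute, SemiconjBy]) (diagBlocks e)

lemma isUnit_diagBlocks_iff {p : Matrix m m R × Matrix n n R} :
    IsUnit (diagBlocks e p) ↔ IsUnit p := by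
  refine ⟨?_, fun h => h.map (diagBlocks e)⟩
  rintro ⟨g, hg⟩
  have hcomm : Commute (g : Matrix ι ι R) (diagBlocks e (1, 0)) := by
    rw [hg, commute_diagBlocks_one_zero_iff]
    exact Set.mem_range_self p
  obtain ⟨q, hq⟩ := (commute_diagBlocks_one_zero_iff e).1 hcomm.units_inv_left
  refine ⟨⟨p, q, diagBlocks_injective e ?_, diagBlocks_injective e ?_⟩, rfl⟩
  · rw [map_mul, map_one, ← hg, hq, Units.mul_inv]
  · rw [map_mul, map_one, ← hg, hq, Units.inv_mul]

lemma mem_stabilizer_diagBlocks_one_zero_iff {g : ConjAct (GL ι R)} :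
    g ∈ MulAction.stabilizer (ConjAct (GL ι R)) (diagBlocks (R := R) e (1, 0)) ↔
      ConjAct.ofConjAct g ∈ Set.range (Units.map (diagBlocks (R := R) e).toMonoidHom) := by
  have hcomm : g ∈ MulAction.stabilizer (ConjAct (GL ι R)) (diagBlocks (R := R) e (1, 0)) ↔
      Commute ((ConjAct.ofConjAct g : GL ι R) : Matrix ι ι R) (diagBlocks e (1, 0)) := by
    rw [MulAction.mem_stabilizer_iff, ConjAct.units_smul_def, Units.mul_inv_eq_iff_eq_mul]
    rfl
  rw [hcomm, commute_diagBlocks_one_zero_iff]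
  constructor
  · rintro ⟨p, hp⟩
    obtain ⟨u, rfl⟩ : IsUnit p := (isUnit_diagBlocks_iff e).1 (hp ▸ Units.isUnit _)
    exact ⟨u, Units.ext hp⟩
  · rintro ⟨u, hu⟩
    exact ⟨u, congrArg Units.val hu⟩

theorem card_stabilizer_diagBlocks_one_zero :
    Nat.card (MulAction.stabilizer (ConjAct (GL ι R)) (diagBlocks (R := R) e (1, 0))) =
      Nat.card (GL m R) * Nat.card (GL n R) := by
  have hinj : Function.Injective (Units.map (diagBlocks (R := R) e).toMonoidHom) :=
    Units.map_injective (diagBlocks_injective e)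
  rw [← Nat.card_prod, ← Nat.card_congr (MulEquiv.prodUnits (M := Matrix m m R)
    (N := Matrix n n R)).toEquiv, ← Nat.card_range_of_injective hinj]
  exact Nat.card_congr (ConjAct.ofConjAct.toEquiv.subtypeEquiv fun g =>
    mem_stabilizer_diagBlocks_one_zero_iff e)

end Semiring

theorem isFittingIdempotent_diagBlocks_iff [Ring R] (e : m ⊕ n ≃ ι) {Y : Matrix m m R}
    {Z : Matrix n n R} :
    IsFittingIdempotent (diagBlocks e (Y, Z)) (diagBlocks e (1, 0)) ↔
      IsUnit Y ∧ IsNilpotent Z := by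
  have hunit : diagBlocks e (Y, Z) * diagBlocks e (1, 0) + (1 - diagBlocks e (1, 0)) =
      diagBlocks e (Y, 1) := by
    rw [← map_one (diagBlocks e), ← map_mul, ← map_sub, ← map_add]
    congr 1
    simp [Prod.ext_iff]
  have hnil : diagBlocks e (Y, Z) * (1 - diagBlocks e (1, 0)) = diagBlocks e (0, Z) := by
    rw [← map_one (diagBlocks e), ← map_sub, ← map_mul]
    congr 1
    simp [Prod.ext_iff]
  have hnil_iff : IsNilpotent (diagBlocks e (0, Z)) ↔ IsNilpotent Z := by
    rw [IsNilpotent.map_iff (diagBlocks_injective e)]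
    exact ⟨fun h => h.map (RingHom.snd (Matrix m m R) (Matrix n n R)), fun ⟨k, hk⟩ =>
      ⟨k + 1, by simp [Prod.ext_iff, pow_succ, hk]⟩⟩
  constructor
  · rintro ⟨-, -, hu, hn⟩
    rw [hunit, isUnit_diagBlocks_iff, Prod.isUnit_iff] at hu
    exact ⟨hu.1, hnil_iff.1 (hnil ▸ hn)⟩
  · rintro ⟨hY, hZ⟩
    refine ⟨?_, (commute_diagBlocks_one_zero_iff e).2 (Set.mem_range_self _), ?_, ?_⟩
    · exact IsIdempotentElem.map (by simp [IsIdempotentElem]) (diagBlocks e)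
    · rw [hunit, isUnit_diagBlocks_iff, Prod.isUnit_iff]
      exact ⟨hY, isUnit_one⟩
    · rwa [hnil, hnil_iff]

lemma rank_diagBlocks_one_zero {K : Type*} [Field K] (e : m ⊕ n ≃ ι) :
    (diagBlocks (R := K) e (1, 0)).rank = Fintype.card m := by
  classical
  have hdiag : (fromBlocks 1 0 0 0 : Matrix (m ⊕ n) (m ⊕ n) K) = diagonal (Sum.elim 1 0) := by
    rw [← fromBlocks_diagonal]; simp
  rw [diagBlocks_apply, rank_reindex, hdiag, rank_diagonal, Fintype.card_subtype,
    Finset.card_filter, Fintype.sum_sum_type]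
  simp

end BlockDiagonal

section IdempotentConjugacy

variable {K V ι : Type*} [Field K] [AddCommGroup V] [Module K V] [FiniteDimensional K V]
  [Fintype ι] [DecidableEq ι]

theorem exists_conj_eq_of_isIdempotentElem_of_finrank_range_eq {f g : Module.End K V}
    (hf : IsIdempotentElem f) (hg : IsIdempotentElem g)
    (h : Module.finrank K (LinearMap.range f) = Module.finrank K (LinearMap.range g)) :
    ∃ φ : V ≃ₗ[K] V, φ.conj f = g := by
  have hker : Module.finrank K (LinearMap.ker f) = Module.finrank K (LinearMap.ker g) := by
    have hf_sum := f.finrank_range_add_finrank_ker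
    have hg_sum := g.finrank_range_add_finrank_ker
    omega
  have hf_proj := LinearMap.IsIdempotentElem.isProj_range f hf
  have hg_proj := LinearMap.IsIdempotentElem.isProj_range g hg
  let A := Submodule.prodEquivOfIsCompl _ _ hf_proj.isCompl
  let B := Submodule.prodEquivOfIsCompl _ _ hg_proj.isCompl
  let C := (LinearEquiv.ofFinrankEq _ _ h).prodCongr (LinearEquiv.ofFinrankEq _ _ hker)
  refine ⟨A.symm ≪≫ₗ C ≪≫ₗ B, ?_⟩
  calc (A.symm ≪≫ₗ C ≪≫ₗ B).conj f
      = (A.symm ≪≫ₗ C ≪≫ₗ B).conj (A.conj (LinearMap.prodMap LinearMap.id 0)) :=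
        congrArg _ hf_proj.eq_conj_prodMap
    _ = B.conj (LinearMap.prodMap LinearMap.id 0) := by
        ext v
        simp [LinearEquiv.conj_apply, C]
    _ = g := hg_proj.eq_conj_prodMap.symm

theorem mem_orbit_iff_rank_eq_of_isIdempotentElem {P Q : Matrix ι ι K}
    (hP : IsIdempotentElem P) (hQ : IsIdempotentElem Q) :
    P ∈ MulAction.orbit (ConjAct (GL ι K)) Q ↔ P.rank = Q.rank := by
  constructor
  · rintro ⟨g, rfl⟩
    simp only [ConjAct.units_smul_def]
    rw [rank_mul_eq_left_of_isUnit_det _ _ (isUnits_det_units _),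
      rank_mul_eq_right_of_isUnit_det _ _ (isUnits_det_units _)]
  · intro h
    obtain ⟨φ, hφ⟩ := exists_conj_eq_of_isIdempotentElem_of_finrank_range_eq
      (hQ.map toLinAlgEquiv') (hP.map toLinAlgEquiv') h.symm
    let u : (Module.End K (ι → K))ˣ := LinearMap.GeneralLinearGroup.ofLinearEquiv φ
    have hu : (u : Module.End K (ι → K)) * toLinAlgEquiv' Q * (u⁻¹ : (Module.End K (ι → K))ˣ) =
        toLinAlgEquiv' P := hφ
    refine ⟨ConjAct.toConjAct (Units.mapEquiv LinearMap.toMatrixAlgEquiv'.toMulEquiv u), ?_⟩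
    simpa [ConjAct.units_smul_def, ← map_inv, -coe_units_inv] using
      congrArg LinearMap.toMatrixAlgEquiv' hu

end IdempotentConjugacy

section OrbitCounting

variable {G α β : Type*} [Group G] [MulAction G α] [MulAction G β]

theorem card_inter_preimage_orbit_mul_card_stabilizer {s : Set α} {f : α → β}
    (hs : ∀ (g : G), ∀ x ∈ s, g • x ∈ s) (hf : ∀ (g : G) (x : α), f (g • x) = g • f x) (b : β) :
    Nat.card ↥(s ∩ f ⁻¹' MulAction.orbit G b) * Nat.card (MulAction.stabilizer G b) =
      Nat.card G * Nat.card ↥(s ∩ f ⁻¹' {b}) := by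
  choose γ hγ using fun p : MulAction.orbit G b => p.2
  have hγ_inv (p : MulAction.orbit G b) : (γ p)⁻¹ • (p : β) = b := by
    rw [inv_smul_eq_iff]; exact (hγ p).symm
  let E : ↥(s ∩ f ⁻¹' MulAction.orbit G b) ≃ MulAction.orbit G b × ↥(s ∩ f ⁻¹' {b}) :=
    { toFun := fun x => (⟨f x, x.2.2⟩, ⟨(γ ⟨f x, x.2.2⟩)⁻¹ • x, hs _ _ x.2.1, by
        rw [Set.mem_preimage, hf]; exact hγ_inv ⟨f x, x.2.2⟩⟩)
      invFun := fun p => ⟨γ p.1 • p.2, hs _ _ p.2.2.1, by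
        rw [Set.mem_preimage, hf, p.2.2.2]; exact MulAction.mem_orbit _ _⟩
      left_inv := fun x => Subtype.ext (smul_inv_smul _ _)
      right_inv := by
        rintro ⟨p, x, hx, rfl⟩
        have hp : f (γ p • x) = p := by rw [hf]; exact hγ p
        ext
        · exact hp
        · simp [hp] }
  rw [Nat.card_congr E, Nat.card_prod, mul_right_comm, ← Nat.card_prod,
    Nat.card_congr (MulAction.orbitProdStabilizerEquivGroup G b)]

end OrbitCounting

section FittingMatrix

variable {F : Type*} [Field F] {d : ℕ}

/-- The matrix of the projection `π_X` onto `V_inv(X)` along `V_nil(X)`. -/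
noncomputable def fittingMatrix (X : Matrix (Fin d) (Fin d) F) : Matrix (Fin d) (Fin d) F :=
  LinearMap.toMatrix' (fittingProj X)

theorem isFittingIdempotent_fittingMatrix (X : Matrix (Fin d) (Fin d) F) :
    IsFittingIdempotent X (fittingMatrix X) := by
  have hd : Module.finrank F (Fin d → F) ≤ d := (Module.finrank_fin_fun F).le
  have hcompl : IsCompl (Vinv X) (Vnil X) := isCompl_range_pow_ker_pow X.mulVecLin hd
  have hproj : fittingProj X = Submodule.projection _ _ hcompl := dif_pos hcompl
  have hX : LinearMap.toMatrixAlgEquiv' X.mulVecLin = X := LinearMap.toMatrix'_toLin' X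
  have hfit := (isFittingIdempotent_projection X.mulVecLin hd hcompl).map
    (LinearMap.toMatrixAlgEquiv' : _ ≃ₐ[F] Matrix (Fin d) (Fin d) F).toRingHom
  rw [fittingMatrix, hproj]
  exact (congrArg (IsFittingIdempotent · _) hX).mp hfit

lemma fittingMatrix_eq_iff {X P : Matrix (Fin d) (Fin d) F} :
    fittingMatrix X = P ↔ IsFittingIdempotent X P :=
  ⟨fun h => h ▸ isFittingIdempotent_fittingMatrix X, (isFittingIdempotent_fittingMatrix X).unique⟩

lemma fittingMatrix_smul (g : ConjAct (GL (Fin d) F)) (X : Matrix (Fin d) (Fin d) F) :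
    fittingMatrix (g • X) = g • fittingMatrix X :=
  fittingMatrix_eq_iff.2 ((isFittingIdempotent_fittingMatrix X).map
    (MulSemiringAction.toRingHom (ConjAct (GL (Fin d) F)) _ g))

end FittingMatrix

lemma embedBlock_eq_diagBlocks {F : Type*} [Field F] {m n : ℕ} (Y : Matrix (Fin m) (Fin m) F) :
    embedBlock (m + n) Y = diagBlocks finSumFinEquiv (Y, 0) := by
  ext i j
  induction i using Fin.addCases <;> induction j using Fin.addCases <;>
    simp [embedBlock, diagBlocks_apply]

/-- The number of nilpotent `n × n` matrices over `F`. -/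
noncomputable def nilpotentCard (F : Type*) [Field F] (n : ℕ) : ℕ :=
  Nat.card {Z : Matrix (Fin n) (Fin n) F // IsNilpotent Z}

namespace IsNI

variable {F : Type*} [Field F]

lemma univ {d : ℕ} : IsNI (Set.univ : Set (Matrix (Fin d) (Fin d) F)) :=
  ⟨fun _ _ _ => Set.mem_univ _, fun _ => Iff.rfl⟩

section Membership

variable {d : ℕ} {N : Set (Matrix (Fin d) (Fin d) F)}

lemma mem_iff_mul_fittingMatrix_mem (hN : IsNI N) {X : Matrix (Fin d) (Fin d) F} :
    X ∈ N ↔ X * fittingMatrix X ∈ N := by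
  rw [hN.2 X, LinearMap.toMatrix'_comp, ← toLin'_apply', LinearMap.toMatrix'_toLin',
    fittingMatrix]

lemma smul_mem (hN : IsNI N) (g : ConjAct (GL (Fin d) F)) {X : Matrix (Fin d) (Fin d) F}
    (hX : X ∈ N) : g • X ∈ N := by
  simpa [ConjAct.units_smul_def] using hN.1 X hX (ConjAct.ofConjAct g)⁻¹

end Membership

variable {m n : ℕ} {N : Set (Matrix (Fin (m + n)) (Fin (m + n)) F)}

lemma diagBlocks_mem_iff (hN : IsNI N) (Y : GL (Fin m) F) {Z : Matrix (Fin n) (Fin n) F}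
    (hZ : IsNilpotent Z) : diagBlocks finSumFinEquiv (Y.val, Z) ∈ N ↔ Y ∈ NIsub N m := by
  have hπ : fittingMatrix (diagBlocks finSumFinEquiv (Y.val, Z)) =
      diagBlocks finSumFinEquiv (1, 0) :=
    fittingMatrix_eq_iff.2 ((isFittingIdempotent_diagBlocks_iff _).2 ⟨Y.isUnit, hZ⟩)
  rw [hN.mem_iff_mul_fittingMatrix_mem, hπ, ← map_mul, Prod.mk_mul_mk, mul_one, mul_zero,
    ← embedBlock_eq_diagBlocks]
  rfl

theorem card_inter_fittingMatrix_eq_diagBlocks_one_zero (hN : IsNI N) :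
    Nat.card ↥(N ∩ fittingMatrix ⁻¹' {diagBlocks finSumFinEquiv (1, 0)}) =
      Nat.card (NIsub N m) * nilpotentCard F n := by
  rw [nilpotentCard, ← Nat.card_prod]
  refine (Nat.card_eq_of_bijective (fun p : NIsub N m × {Z // IsNilpotent Z} =>
    ⟨diagBlocks finSumFinEquiv (p.1.1.1, p.2.1), (hN.diagBlocks_mem_iff p.1 p.2.2).2 p.1.2,
      fittingMatrix_eq_iff.2 ((isFittingIdempotent_diagBlocks_iff _).2 ⟨p.1.1.isUnit, p.2.2⟩)⟩)
    ⟨?_, ?_⟩).symm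
  · rintro ⟨⟨Y, hY⟩, Z, hZ⟩ ⟨⟨Y', hY'⟩, Z', hZ'⟩ h
    have h' := diagBlocks_injective _ (congrArg Subtype.val h)
    simpa [Units.ext_iff] using h'
  · rintro ⟨X, hXN, hX⟩
    have hfit := fittingMatrix_eq_iff.1 hX
    obtain ⟨⟨Y, Z⟩, rfl⟩ := (commute_diagBlocks_one_zero_iff _).1 hfit.commute
    obtain ⟨⟨Y, rfl⟩, hZ⟩ := (isFittingIdempotent_diagBlocks_iff _).1 hfit
    exact ⟨⟨⟨Y, (hN.diagBlocks_mem_iff Y hZ).1 hXN⟩, Z, hZ⟩, rfl⟩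

theorem card_rank_fittingMatrix_eq (hN : IsNI N) :
    Nat.card {X : N // (fittingMatrix X.1).rank = m} *
        (Nat.card (GL (Fin m) F) * Nat.card (GL (Fin n) F)) =
      Nat.card (GL (Fin (m + n)) F) * (Nat.card (NIsub N m) * nilpotentCard F n) := by
  set E : Matrix (Fin (m + n)) (Fin (m + n)) F := diagBlocks finSumFinEquiv (1, 0) with hE
  have hE_idem : IsIdempotentElem E :=
    IsIdempotentElem.map (by simp [IsIdempotentElem]) (diagBlocks _)
  have hE_rank : E.rank = m := by rw [hE, rank_diagBlocks_one_zero, Fintype.card_fin]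
  have hmem (X : Matrix (Fin (m + n)) (Fin (m + n)) F) :
      (fittingMatrix X).rank = m ↔
        X ∈ fittingMatrix ⁻¹' MulAction.orbit (ConjAct (GL (Fin (m + n)) F)) E := by
    rw [Set.mem_preimage, mem_orbit_iff_rank_eq_of_isIdempotentElem
      (isFittingIdempotent_fittingMatrix X).isIdempotentElem hE_idem, hE_rank]
  rw [← card_stabilizer_diagBlocks_one_zero finSumFinEquiv,
    ← hN.card_inter_fittingMatrix_eq_diagBlocks_one_zero,
    Nat.card_congr ((Equiv.subtypeSubtypeEquivSubtypeInter _ _).trans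
      (Equiv.subtypeEquivRight fun X => and_congr_right' (hmem X)))]
  exact card_inter_preimage_orbit_mul_card_stabilizer (fun g _ => hN.smul_mem g)
    fittingMatrix_smul E

end IsNI

section Omega

lemma omegaqd_zero (q : ℕ) : omegaqd 0 q = 1 := rfl

lemma omegaqd_succ (n q : ℕ) : omegaqd (n + 1) q = omegaqd n q * (1 - (q : ℝ)⁻¹ ^ (n + 1)) :=
  Finset.prod_Icc_succ_top (Nat.le_add_left 1 n) _

variable {q : ℕ}

lemma omegaqd_pos (hq : 1 < q) (n : ℕ) : 0 < omegaqd n q := by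
  have hq' : (q : ℝ)⁻¹ < 1 := inv_lt_one_of_one_lt₀ (by exact_mod_cast hq)
  refine Finset.prod_pos fun j hj => sub_pos.2 (pow_lt_one₀ (by positivity) hq' ?_)
  have hj_one := (Finset.mem_Icc.1 hj).1
  omega

lemma inv_omegaqd_succ_sub_inv_omegaqd (hq : 1 < q) (n : ℕ) :
    (omegaqd (n + 1) q)⁻¹ - (omegaqd n q)⁻¹ = (q : ℝ)⁻¹ ^ (n + 1) * (omegaqd (n + 1) q)⁻¹ := by
  have hn := (omegaqd_pos hq n).ne'
  have hn_succ := (omegaqd_pos hq (n + 1)).ne'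
  rw [inv_sub_inv hn_succ hn, ← div_eq_mul_inv, div_eq_div_iff (mul_ne_zero hn_succ hn) hn_succ,
    omegaqd_succ]
  ring

lemma omegaqd_antitone (hq : 1 < q) : Antitone (omegaqd · q) := by
  refine antitone_nat_of_succ_le fun n => ?_
  rw [omegaqd_succ]
  have hpow : (0 : ℝ) ≤ (q : ℝ)⁻¹ ^ (n + 1) := by positivity
  exact mul_le_of_le_one_right (omegaqd_pos hq n).le (by linarith)

end Omega

section FiniteCard

variable {F : Type*} [Field F] [Finite F]

lemma cast_card_GL_pos (n : ℕ) : (0 : ℝ) < Nat.card (GL (Fin n) F) := by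
  exact_mod_cast Nat.card_pos

lemma card_eq_sum_card_rank_fittingMatrix {d : ℕ} (N : Set (Matrix (Fin d) (Fin d) F)) :
    Nat.card N = ∑ p ∈ HasAntidiagonal.antidiagonal d,
      Nat.card {X : N // (fittingMatrix X.1).rank = p.1} := by
  classical
  have := Fintype.ofFinite N
  simp only [Nat.card_eq_fintype_card, Fintype.card_subtype, ← Finset.card_univ (α := N)]
  rw [Finset.Nat.sum_antidiagonal_eq_sum_range_succ_mk]
  refine Finset.card_eq_sum_card_fiberwise fun X _ => ?_
  have hrank := (fittingMatrix X.1).rank_le_width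
  simpa [Nat.lt_succ_iff] using hrank

theorem IsNI.card_div_card_GL_eq_sum {d : ℕ} {N : Set (Matrix (Fin d) (Fin d) F)} (hN : IsNI N) :
    (Nat.card N : ℝ) / Nat.card (GL (Fin d) F) = ∑ p ∈ HasAntidiagonal.antidiagonal d,
      (Nat.card (NIsub N p.1) : ℝ) / Nat.card (GL (Fin p.1) F) *
        ((nilpotentCard F p.2 : ℝ) / Nat.card (GL (Fin p.2) F)) := by
  rw [card_eq_sum_card_rank_fittingMatrix N, Nat.cast_sum, Finset.sum_div]
  refine Finset.sum_congr rfl fun ⟨m, n⟩ hmn => ?_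
  obtain rfl : m + n = d := HasAntidiagonal.mem_antidiagonal.1 hmn
  have hm := cast_card_GL_pos (F := F) m
  have hn := cast_card_GL_pos (F := F) n
  rw [div_mul_div_comm, div_eq_div_iff (cast_card_GL_pos _).ne' (by positivity),
    mul_comm _ (Nat.card (GL (Fin (m + n)) F) : ℝ)]
  exact_mod_cast hN.card_rank_fittingMatrix_eq

end FiniteCard

section FiniteField

variable {F : Type*} [Field F] [Fintype F]

local notation "q" => Fintype.card F

lemma card_GL_succ (n : ℕ) : Nat.card (GL (Fin (n + 1)) F) =
    (q ^ (n + 1) - 1) * q ^ n * Nat.card (GL (Fin n) F) := by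
  have hfactor (i : Fin n) : q ^ (n + 1) - q ^ (i.succ : ℕ) = q * (q ^ n - q ^ (i : ℕ)) := by
    rw [Nat.mul_sub, Fin.val_succ, pow_succ', pow_succ']
  simp only [Matrix.card_GL_field, Fin.prod_univ_succ, hfactor, Finset.prod_mul_distrib,
    Finset.prod_const, Finset.card_univ, Fintype.card_fin, Fin.val_zero, pow_zero, mul_assoc]

theorem card_GL_eq_pow_mul_omegaqd (n : ℕ) :
    (Nat.card (GL (Fin n) F) : ℝ) = (q : ℝ) ^ n ^ 2 * omegaqd n q := by
  induction n with
  | zero => simp [omegaqd_zero]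
  | succ n ih =>
    have hq : (q : ℝ) ≠ 0 := by exact_mod_cast Fintype.card_ne_zero
    rw [card_GL_succ, omegaqd_succ, Nat.cast_mul, ih, Nat.cast_mul,
      Nat.cast_sub (Nat.one_le_pow _ _ Fintype.card_pos)]
    push_cast
    rw [inv_pow]
    field_simp
    ring

-- The counting identity for `N = M(d, q)`.
lemma sum_nilpotentCard_div_card_GL (d : ℕ) :
    ∑ p ∈ HasAntidiagonal.antidiagonal d,
      (nilpotentCard F p.2 : ℝ) / Nat.card (GL (Fin p.2) F) = (omegaqd d q)⁻¹ := by
  have hcard : (Nat.card (Matrix (Fin d) (Fin d) F) : ℝ) = (q : ℝ) ^ d ^ 2 := by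
    rw [Nat.card_congr Matrix.of.symm]
    simp [sq, pow_mul]
  have hsub (i : ℕ) : NIsub (Set.univ : Set (Matrix (Fin d) (Fin d) F)) i = Set.univ := rfl
  have hsum := (IsNI.univ (F := F) (d := d)).card_div_card_GL_eq_sum
  simp only [hsub, Nat.card_univ, div_self (cast_card_GL_pos _).ne', one_mul] at hsum
  have hq : (q : ℝ) ^ d ^ 2 ≠ 0 := by positivity
  rw [← hsum, hcard, card_GL_eq_pow_mul_omegaqd, div_mul_cancel_left₀ hq]

-- Fine and Herstein: there are `q ^ (n ^ 2 - n)` nilpotent matrices.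
theorem nilpotentCard_div_card_GL (n : ℕ) :
    (nilpotentCard F n : ℝ) / Nat.card (GL (Fin n) F) = (q : ℝ)⁻¹ ^ n * (omegaqd n q)⁻¹ := by
  cases n with
  | zero => simpa using sum_nilpotentCard_div_card_GL (F := F) 0
  | succ n =>
    have hsum := sum_nilpotentCard_div_card_GL (F := F) (n + 1)
    rw [Finset.Nat.sum_antidiagonal_succ, sum_nilpotentCard_div_card_GL,
      ← eq_sub_iff_add_eq] at hsum
    rw [hsum, inv_omegaqd_succ_sub_inv_omegaqd Fintype.one_lt_card]

lemma inv_pow_mul_nilpotentCard_div_card_GL_le (i j : ℕ) :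
    (q : ℝ)⁻¹ ^ i * ((nilpotentCard F j : ℝ) / Nat.card (GL (Fin j) F)) ≤
      (q : ℝ)⁻¹ ^ (i + j) * (omegaqd (i + j) q)⁻¹ := by
  have hω : (omegaqd j q)⁻¹ ≤ (omegaqd (i + j) q)⁻¹ :=
    inv_anti₀ (omegaqd_pos Fintype.one_lt_card _)
      (omegaqd_antitone Fintype.one_lt_card (Nat.le_add_left j i))
  rw [nilpotentCard_div_card_GL, ← mul_assoc, ← pow_add]
  exact mul_le_mul_of_nonneg_left hω (by positivity)

theorem IsNI.sub_sum_mul_le_card_div {d : ℕ} {N : Set (Matrix (Fin d) (Fin d) F)} (hN : IsNI N)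
    (a : ℝ) {k : ℕ → ℝ} (hk : ∀ i, 0 ≤ k i)
    (hbound : ∀ i ≤ d,
      a - k i * (q : ℝ)⁻¹ ^ i ≤ (Nat.card (NIsub N i) : ℝ) / Nat.card (GL (Fin i) F)) :
    a - (∑ i ∈ Finset.range (d + 1), k i) * (q : ℝ)⁻¹ ^ d ≤
      (Nat.card N : ℝ) / (q : ℝ) ^ d ^ 2 := by
  set ν : ℕ → ℝ := fun n => (nilpotentCard F n : ℝ) / Nat.card (GL (Fin n) F)
  have hterm : ∀ p ∈ HasAntidiagonal.antidiagonal d,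
      a * ν p.2 - k p.1 * ((q : ℝ)⁻¹ ^ d * (omegaqd d q)⁻¹) ≤
        (Nat.card (NIsub N p.1) : ℝ) / Nat.card (GL (Fin p.1) F) * ν p.2 := by
    rintro ⟨i, j⟩ hij
    obtain rfl : i + j = d := HasAntidiagonal.mem_antidiagonal.1 hij
    calc a * ν j - k i * ((q : ℝ)⁻¹ ^ (i + j) * (omegaqd (i + j) q)⁻¹)
        ≤ a * ν j - k i * ((q : ℝ)⁻¹ ^ i * ν j) :=
          sub_le_sub_left (mul_le_mul_of_nonneg_left
            (inv_pow_mul_nilpotentCard_div_card_GL_le i j) (hk i)) _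
      _ = (a - k i * (q : ℝ)⁻¹ ^ i) * ν j := by ring
      _ ≤ (Nat.card (NIsub N i) : ℝ) / Nat.card (GL (Fin i) F) * ν j :=
          mul_le_mul_of_nonneg_right (hbound i (Nat.le_add_right i j)) (by positivity)
  have hsum := Finset.sum_le_sum hterm
  rw [← hN.card_div_card_GL_eq_sum, Finset.sum_sub_distrib, ← Finset.mul_sum, ← Finset.sum_mul,
    sum_nilpotentCard_div_card_GL, Finset.Nat.sum_antidiagonal_eq_sum_range_succ_mk,
    card_GL_eq_pow_mul_omegaqd, ← div_div, ← mul_assoc, ← sub_mul,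
    ← div_eq_mul_inv] at hsum
  exact (div_le_div_iff_of_pos_right (omegaqd_pos Fintype.one_lt_card d)).1 hsum

end FiniteField

lemma natCast_le_three_halves_pow (d : ℕ) : (d : ℝ) ≤ (3 / 2) ^ d := by
  rcases Nat.lt_or_ge d 2 with hd | hd
  · interval_cases d <;> norm_num
  · induction d, hd using Nat.le_induction with
    | base => norm_num
    | succ n hn ih =>
      have hn' : (2 : ℝ) ≤ n := by exact_mod_cast hn
      rw [pow_succ]
      push_cast
      linarith

theorem stmt7 (q d : ℕ) (hq : IsPrimePow q) (hd : 0 < d)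
    (F : Type*) [Field F] [Fintype F] (hF : Fintype.card F = q)
    (N : Set (Matrix (Fin d) (Fin d) F)) (hN : IsNI N) (a k : ℝ) (ha : 0 < a) (hk : 0 < k)
    (hbound : ∀ i : ℕ, 1 ≤ i → i ≤ d →
      a - k * ((q : ℝ))⁻¹ ^ i ≤ (Nat.card (NIsub N i) : ℝ) / Nat.card (GL (Fin i) F)) :
    a - (a + k) * d * ((q : ℝ))⁻¹ ^ d ≤ (Nat.card N : ℝ) / (q : ℝ) ^ (d ^ 2) ∧
      a - (a + k) * (2 * (q : ℝ) / 3)⁻¹ ^ d ≤ a - (a + k) * d * ((q : ℝ))⁻¹ ^ d := by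
  subst hF
  constructor
  · -- With `a` in place of `k`, the bound at `i = 0` is the nonnegativity of its right-hand side.
    have hlower := hN.sub_sum_mul_le_card_div a (k := fun i => if i = 0 then a else k)
      (fun i => by split_ifs <;> positivity) fun i hi => by
        rcases i with _ | i
        · simp only [if_true, pow_zero, mul_one, sub_self]
          positivity
        · exact hbound (i + 1) (Nat.le_add_left 1 i) hi
    have hd' : (1 : ℝ) ≤ d := by exact_mod_cast hd
    have hsum : (∑ i ∈ Finset.range (d + 1), if i = 0 then a else k) ≤ (a + k) * d := by
      rw [Finset.sum_range_succ']
      simp only [Nat.add_eq_zero_iff, one_ne_zero, and_false, if_false, if_true, Finset.sum_const,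
        Finset.card_range, nsmul_eq_mul]
      nlinarith
    exact (sub_le_sub_left (mul_le_mul_of_nonneg_right hsum (by positivity)) a).trans hlower
  · have hpow : (2 * (Fintype.card F : ℝ) / 3)⁻¹ ^ d =
        (3 / 2) ^ d * (Fintype.card F : ℝ)⁻¹ ^ d := by
      rw [← mul_pow, inv_div, div_mul_eq_div_div, div_eq_mul_inv]
    rw [hpow, mul_assoc]
    gcongr
    exact natCast_le_three_halves_pow d
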